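/- Let (G, G⁺, Δ) be a Garside structure and x ∈ G. (1) If x is conjugate to an element of G⁺, then R(x) = C⁺(x). (2) If x is conjugate to a negative element (an element whose inverse lies in G⁺), then R(x) = C⁻(x) = (C⁺(x⁻¹))⁻¹, where C⁻(x) denotes the set of negative elements conjugate to x. -/

import Mathlib

open scoped Pointwise Classical

/-- A Garside structure on a group `G`: a submonoid `pos` of positive elements with
trivial units, prefix and suffix lattice operations, and a Garside element `delta`. -/
structure GarsideStructure (G : Type*) [Group G] where
  /-- the submonoid of positive elements -/
  pos : Submonoid G
  /-- the Garside element Δ -/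
  delta : G
  /-- meet for the prefix order -/
  meet : G → G → G
  /-- join for the prefix order -/
  join : G → G → G
  /-- meet for the suffix order -/
  rmeet : G → G → G
  /-- join for the suffix order -/
  rjoin : G → G → G
  units_triv : ∀ a : G, a ∈ pos → a⁻¹ ∈ pos → a = 1
  meet_le_left : ∀ a b : G, (meet a b)⁻¹ * a ∈ pos
  meet_le_right : ∀ a b : G, (meet a b)⁻¹ * b ∈ pos
  le_meet : ∀ a b c : G, c⁻¹ * a ∈ pos → c⁻¹ * b ∈ pos → c⁻¹ * meet a b ∈ pos
  le_join_left : ∀ a b : G, a⁻¹ * join a b ∈ pos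
  le_join_right : ∀ a b : G, b⁻¹ * join a b ∈ pos
  join_le : ∀ a b c : G, a⁻¹ * c ∈ pos → b⁻¹ * c ∈ pos → (join a b)⁻¹ * c ∈ pos
  rmeet_le_left : ∀ a b : G, a * (rmeet a b)⁻¹ ∈ pos
  rmeet_le_right : ∀ a b : G, b * (rmeet a b)⁻¹ ∈ pos
  le_rmeet : ∀ a b c : G, a * c⁻¹ ∈ pos → b * c⁻¹ ∈ pos → rmeet a b * c⁻¹ ∈ pos
  rjoin_le_left : ∀ a b : G, rjoin a b * a⁻¹ ∈ pos
  rjoin_le_right : ∀ a b : G, rjoin a b * b⁻¹ ∈ pos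
  rjoin_le : ∀ a b c : G, c * a⁻¹ ∈ pos → c * b⁻¹ ∈ pos → c * (rjoin a b)⁻¹ ∈ pos
  delta_pos : delta ∈ pos
  /-- Δ is balanced: its positive prefixes coincide with its positive suffixes -/
  delta_balanced : ∀ s : G, s ∈ pos → (s⁻¹ * delta ∈ pos ↔ delta * s⁻¹ ∈ pos)
  /-- the set of simple elements (divisors of Δ) is finite -/
  divDelta_finite : {s : G | s ∈ pos ∧ s⁻¹ * delta ∈ pos}.Finite
  /-- the simple elements generate `G` -/
  divDelta_generates : Subgroup.closure {s : G | s ∈ pos ∧ s⁻¹ * delta ∈ pos} = ⊤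
  /-- the atoms generate the positive monoid -/
  atoms_generate :
    Submonoid.closure {a : G | a ∈ pos ∧ a ≠ 1 ∧
      ∀ b ∈ pos, b⁻¹ * a ∈ pos → b = 1 ∨ b = a} = pos
  /-- every atom divides Δ -/
  atoms_divide_delta : ∀ a : G, a ∈ pos → a ≠ 1 →
    (∀ b ∈ pos, b⁻¹ * a ∈ pos → b = 1 ∨ b = a) → a⁻¹ * delta ∈ pos
  /-- every element is bounded below and above by powers of Δ -/
  delta_bounds : ∀ x : G, ∃ p q : ℤ, p ≤ q ∧ (delta ^ p)⁻¹ * x ∈ pos ∧ x⁻¹ * delta ^ q ∈ pos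
  /-- conjugation by Δ maps the positive monoid bijectively onto itself -/
  conj_delta : ∀ a : G, a ∈ pos ↔ delta * a * delta⁻¹ ∈ pos
  /-- some positive power of Δ is central -/
  central_power : ∃ n : ℕ, 0 < n ∧ delta ^ n ∈ Subgroup.center G
  /-- no infinite strictly decreasing (for the prefix order) sequence of positive elements -/
  no_infinite_descent : ¬ ∃ f : ℕ → G, (∀ n, f n ∈ pos) ∧
    ∀ n, (f (n + 1))⁻¹ * f n ∈ pos ∧ f (n + 1) ≠ f n

namespace GarsideStructure

variable {G : Type*} [Group G] (S : GarsideStructure G)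

/-- the prefix order: `a ≼ b` iff `a⁻¹ * b` is positive -/
def le (a b : G) : Prop := a⁻¹ * b ∈ S.pos

/-- the set of positive prefixes of an element -/
def Div (d : G) : Set G := {s : G | s ∈ S.pos ∧ S.le s d}

/-- atoms: nontrivial positive elements with no nontrivial proper positive prefix -/
def IsAtomic (a : G) : Prop :=
  a ∈ S.pos ∧ a ≠ 1 ∧ ∀ b ∈ S.pos, S.le b a → b = 1 ∨ b = a

/-- the set of atoms -/
def atoms : Set G := {a : G | S.IsAtomic a}

/-- the left denominator of `x`: `D_L x = (1 ∧ x)⁻¹` -/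
def DL (x : G) : G := (S.meet 1 x)⁻¹

/-- the left numerator of `x`: `N_L x = D_L x * x` -/
def NL (x : G) : G := S.DL x * x

/-- the (left) swap `φ(x) = N_L x * (D_L x)⁻¹ = D_L x * x * (D_L x)⁻¹` -/
def swap (x : G) : G := S.DL x * x * (S.DL x)⁻¹

/-- an element is recurrent if it is fixed by some positive iterate of the swap map -/
def Recurrent (x : G) : Prop := ∃ m : ℕ, 0 < m ∧ S.swap^[m] x = x

/-- the set `R(x)` of recurrent conjugates of `x` -/
def Rset (x : G) : Set G := {y : G | IsConj x y ∧ S.Recurrent y}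

/-- the set `C⁺(x)` of positive conjugates of `x` -/
def Cpos (x : G) : Set G := {y : G | IsConj x y ∧ y ∈ S.pos}

/-- the set `C⁻(x)` of negative conjugates of `x` -/
def Cneg (x : G) : Set G := {y : G | IsConj x y ∧ y⁻¹ ∈ S.pos}

/-- the transport of `u` at `y`: with `y = a⁻¹ b` reduced, `u^{(1)} = (a u) ∧ (b u)` -/
def transport (y u : G) : G := S.meet (S.DL y * u) (S.NL y * u)

/-- `Δ_X`: the least upper bound for the prefix order of a set `X` (`1` if there is none) -/
noncomputable def deltaOf (X : Set G) : G :=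
  if h : ∃ d : G, (∀ x ∈ X, S.le x d) ∧ ∀ c : G, (∀ x ∈ X, S.le x c) → S.le d c
  then h.choose else 1

/-- the closure `X̄ = Div(Δ_X) ∩ 𝒜` of a set of atoms -/
noncomputable def closureOf (X : Set G) : Set G := S.Div (S.deltaOf X) ∩ S.atoms

/-- the subgroup `G_X` generated by the closure of `X` -/
noncomputable def GX (X : Set G) : Subgroup G := Subgroup.closure (S.closureOf X)

/-- the support of an element: the closure of the set of atoms appearing in atom
factorizations of its left denominator and left numerator -/
noncomputable def supp (x : G) : Set G :=
  if h : ∃ p : List G × List G,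
      (∀ a ∈ p.1, a ∈ S.atoms) ∧ (∀ a ∈ p.2, a ∈ S.atoms) ∧
      p.1.prod = S.DL x ∧ p.2.prod = S.NL x
  then S.closureOf ({a : G | a ∈ h.choose.1} ∪ {a : G | a ∈ h.choose.2})
  else ∅

/-- an LCM-Garside structure -/
structure IsLCM : Prop where
  delta_eq : S.delta = S.deltaOf S.atoms
  balanced : ∀ X ⊆ S.atoms, ∀ s ∈ S.pos,
    (S.le s (S.deltaOf X) ↔ S.deltaOf X * s⁻¹ ∈ S.pos)
  div_eq : ∀ X ⊆ S.atoms,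
    S.Div (S.deltaOf X) = S.Div S.delta ∩ {g : G | g ∈ S.GX X ∧ g ∈ S.pos}
  factor_closed : ∀ X ⊆ S.atoms, ∀ g : G, g ∈ S.GX X → g ∈ S.pos →
    ∀ a b : G, a ∈ S.pos → b ∈ S.pos → g = a * b → a ∈ S.GX X ∧ b ∈ S.GX X
  lattice_closed : ∀ X ⊆ S.atoms, ∀ a b : G, a ∈ S.GX X → b ∈ S.GX X →
    S.meet a b ∈ S.GX X ∧ S.join a b ∈ S.GX X
  fraction_closed : ∀ X ⊆ S.atoms, ∀ g : G, g ∈ S.GX X →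
    S.DL g ∈ S.GX X ∧ S.NL g ∈ S.GX X

/-- a standard parabolic subgroup: the subgroup generated by a saturated set of atoms -/
noncomputable def IsStandardParabolic (H : Subgroup G) : Prop :=
  ∃ X : Set G, X ⊆ S.atoms ∧ S.closureOf X = X ∧ H = S.GX X

/-- a parabolic subgroup: a conjugate of a standard parabolic subgroup -/
noncomputable def IsParabolic (H : Subgroup G) : Prop :=
  ∃ (P : Subgroup G) (c : G), S.IsStandardParabolic P ∧
    H = Subgroup.map (MulAut.conj c).toMonoidHom P

/-- the structure is support-preserving if conjugations between positive elements
conjugate the corresponding parabolic subgroups of the supports -/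
noncomputable def SupportPreserving : Prop :=
  ∀ y ∈ S.pos, ∀ z ∈ S.pos, ∀ α : G, α⁻¹ * y * α = z →
    Subgroup.map (MulAut.conj α⁻¹).toMonoidHom (S.GX (S.supp y)) = S.GX (S.supp z)

/-- `P` is the parabolic closure of `x` -/
noncomputable def IsParabolicClosure (x : G) (P : Subgroup G) : Prop :=
  S.IsParabolic P ∧ x ∈ P ∧ ∀ H : Subgroup G, S.IsParabolic H → x ∈ H → P ≤ H

end GarsideStructure

/-!
A positive element `c` conjugating `y` to a positive element has the left denominator `D` of `y`
as a suffix, and `c * D⁻¹` conjugates the swap of `y` to the same element. Unless `y` is positive,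
`c * D⁻¹` is a strictly smaller prefix of `c`, so the descending chain condition forces the swap
orbit of `y` into the positive monoid. A conjugator can always be made positive, since multiplying
it by a central power of `Δ` does not change the conjugation. Positive elements are fixed by the
swap, so a periodic orbit containing one of them is a single point. The negative case follows
because inversion commutes with the swap: it exchanges the numerator and denominator of a fraction.
-/

theorem isConj_inv_inv_iff {H : Type*} [Group H] {x y : H} : IsConj x⁻¹ y⁻¹ ↔ IsConj x y :=
  exists_congr fun _ => SemiconjBy.inv_right_iff

open Function in
theorem isFixedPt_of_mem_periodicPts_of_iterate {α : Type*} {f : α → α} {y : α} {m : ℕ}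
    (hy : y ∈ periodicPts f) (hm : IsFixedPt f (f^[m] y)) : IsFixedPt f y := by
  rwa [← minimalPeriod_eq_one_iff_isFixedPt, ← minimalPeriod_apply_iterate hy m,
    minimalPeriod_eq_one_iff_isFixedPt]

namespace GarsideStructure

variable {G : Type*} [Group G] (S : GarsideStructure G)

theorem one_le_iff {a : G} : S.le 1 a ↔ a ∈ S.pos := by
  simp [le]

theorem mul_le_mul_left_iff {a b : G} (c : G) : S.le (c * a) (c * b) ↔ S.le a b := by
  simp [le, mul_assoc]

theorem inv_mul_le_iff {a b c : G} : S.le (c⁻¹ * a) b ↔ S.le a (c * b) := by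
  simp [le, mul_assoc]

protected theorem le_antisymm {a b : G} (hab : S.le a b) (hba : S.le b a) : a = b :=
  inv_mul_eq_one.mp (S.units_triv _ hab (by simpa [le] using hba))

theorem meet_comm (a b : G) : S.meet a b = S.meet b a :=
  S.le_antisymm (S.le_meet b a _ (S.meet_le_right a b) (S.meet_le_left a b))
    (S.le_meet a b _ (S.meet_le_right b a) (S.meet_le_left b a))

theorem mul_meet (a b c : G) : c * S.meet a b = S.meet (c * a) (c * b) := by
  refine S.le_antisymm ?_ (S.inv_mul_le_iff.mp ?_)
  · exact S.le_meet _ _ _ ((S.mul_le_mul_left_iff c).mpr (S.meet_le_left a b))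
      ((S.mul_le_mul_left_iff c).mpr (S.meet_le_right a b))
  · exact S.le_meet _ _ _ (S.inv_mul_le_iff.mpr (S.meet_le_left (c * a) (c * b)))
      (S.inv_mul_le_iff.mpr (S.meet_le_right (c * a) (c * b)))

theorem wellFounded_properPrefix :
    WellFounded fun a b : S.pos => S.le (a : G) b ∧ a ≠ b := by
  refine wellFounded_iff_isEmpty_descending_chain.mpr ⟨fun ⟨f, hf⟩ => ?_⟩
  exact S.no_infinite_descent ⟨fun n => f n, fun n => (f n).2,
    fun n => ⟨(hf n).1, fun h => (hf n).2 (Subtype.ext h)⟩⟩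

theorem dl_mem_pos (y : G) : S.DL y ∈ S.pos := by
  simpa [DL] using S.meet_le_left 1 y

theorem dl_eq_one_iff {y : G} : S.DL y = 1 ↔ y ∈ S.pos := by
  refine inv_eq_one.trans ⟨fun h => ?_, fun h => ?_⟩
  · exact S.one_le_iff.mp (h ▸ S.meet_le_right 1 y)
  · exact S.le_antisymm (S.meet_le_left 1 y)
      (S.le_meet 1 y 1 (by simp) (S.one_le_iff.mpr h))

theorem isFixedPt_swap_of_mem_pos {y : G} (hy : y ∈ S.pos) : Function.IsFixedPt S.swap y := by
  simp [Function.IsFixedPt, swap, S.dl_eq_one_iff.mpr hy]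

theorem dl_inv (y : G) : S.DL y⁻¹ = S.NL y := by
  have h : S.meet 1 y⁻¹ = y⁻¹ * S.meet 1 y := by
    rw [mul_meet, mul_one, inv_mul_cancel, meet_comm]
  simp [NL, DL, h]

theorem swap_inv (y : G) : S.swap y⁻¹ = (S.swap y)⁻¹ := by
  simp [swap, dl_inv, NL, mul_assoc]

theorem recurrent_iff_mem_periodicPts {y : G} :
    S.Recurrent y ↔ y ∈ Function.periodicPts S.swap :=
  Iff.rfl

variable {S} in
theorem Recurrent.inv {y : G} (hy : S.Recurrent y) : S.Recurrent y⁻¹ :=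
  Function.Semiconj.mapsTo_periodicPts (fun z => (S.swap_inv z).symm)
    (S.recurrent_iff_mem_periodicPts.mp hy)

theorem recurrent_inv_iff {y : G} : S.Recurrent y⁻¹ ↔ S.Recurrent y :=
  ⟨fun h => inv_inv y ▸ h.inv, Recurrent.inv⟩

theorem exists_delta_pow_mul_mem_pos (c : G) : ∃ k : ℕ, S.delta ^ k * c ∈ S.pos := by
  obtain ⟨p, -, -, hp, -⟩ := S.delta_bounds c
  obtain ⟨k, rfl | rfl⟩ := p.eq_nat_or_neg
  · refine ⟨0, ?_⟩
    simpa using S.pos.mul_mem (S.pos.pow_mem S.delta_pos k) hp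
  · exact ⟨k, by simpa using hp⟩

theorem exists_mem_center_mul_mem_pos (c : G) : ∃ z ∈ Subgroup.center G, z * c ∈ S.pos := by
  obtain ⟨n, hn, hcentral⟩ := S.central_power
  obtain ⟨k, hk⟩ := S.exists_delta_pow_mul_mem_pos c
  obtain ⟨j, hj⟩ := Nat.exists_eq_add_of_le' (Nat.le_mul_of_pos_left k hn)
  refine ⟨(S.delta ^ n) ^ k, Subgroup.pow_mem _ hcentral k, ?_⟩
  rw [← pow_mul, hj, pow_add, mul_assoc]
  exact S.pos.mul_mem (S.pos.pow_mem S.delta_pos j) hk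

theorem exists_mem_pos_conj_eq {y z : G} (h : IsConj y z) : ∃ c ∈ S.pos, c * y * c⁻¹ = z := by
  obtain ⟨c, rfl⟩ := isConj_iff.mp h
  obtain ⟨d, hd, hdc⟩ := S.exists_mem_center_mul_mem_pos c
  have hcomm : Commute d (c * y * c⁻¹) := (Subgroup.mem_center_iff.mp hd _).symm
  refine ⟨d * c, hdc, ?_⟩
  calc d * c * y * (d * c)⁻¹ = d * (c * y * c⁻¹) * d⁻¹ := by group
    _ = c * y * c⁻¹ := hcomm.mul_inv_cancel

theorem mul_inv_dl_mem_pos {c y : G} (hc : c ∈ S.pos) (h : c * y * c⁻¹ ∈ S.pos) :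
    c * (S.DL y)⁻¹ ∈ S.pos := by
  have hcy : c * y ∈ S.pos := by simpa using S.pos.mul_mem h hc
  have hle : S.le c⁻¹ (S.meet 1 y) :=
    S.le_meet 1 y c⁻¹ (by simpa using hc) (by simpa using hcy)
  simpa [le, DL] using hle

theorem conj_swap (c y : G) :
    c * (S.DL y)⁻¹ * S.swap y * (c * (S.DL y)⁻¹)⁻¹ = c * y * c⁻¹ := by
  simp [swap, mul_assoc]

theorem exists_iterate_swap_mem_pos_of_conj_mem_pos (c : S.pos) {y : G}
    (h : c * y * (c : G)⁻¹ ∈ S.pos) : ∃ m : ℕ, S.swap^[m] y ∈ S.pos := by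
  induction c using S.wellFounded_properPrefix.induction generalizing y with
  | _ c ih =>
  by_cases hy : y ∈ S.pos
  · exact ⟨0, hy⟩
  let c' : S.pos := ⟨c * (S.DL y)⁻¹, S.mul_inv_dl_mem_pos c.2 h⟩
  have hle : S.le (c' : G) c := by simpa [c', le] using S.dl_mem_pos y
  have hne : c' ≠ c := fun heq =>
    hy (S.dl_eq_one_iff.mp (by simpa [c'] using congrArg Subtype.val heq))
  have hconj : c' * S.swap y * (c' : G)⁻¹ ∈ S.pos := (S.conj_swap c y).symm ▸ h
  obtain ⟨m, hm⟩ := ih c' ⟨hle, hne⟩ hconj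
  exact ⟨m + 1, hm⟩

theorem recurrent_iff_mem_pos {y z : G} (hz : z ∈ S.pos) (hyz : IsConj y z) :
    S.Recurrent y ↔ y ∈ S.pos := by
  refine ⟨fun hy => ?_, fun hy => ⟨1, one_pos, S.isFixedPt_swap_of_mem_pos hy⟩⟩
  obtain ⟨c, hc, rfl⟩ := S.exists_mem_pos_conj_eq hyz
  obtain ⟨m, hm⟩ := S.exists_iterate_swap_mem_pos_of_conj_mem_pos ⟨c, hc⟩ hz
  have hfix : Function.IsFixedPt S.swap y := isFixedPt_of_mem_periodicPts_of_iterate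
    (S.recurrent_iff_mem_periodicPts.mp hy) (S.isFixedPt_swap_of_mem_pos hm)
  rwa [hfix.iterate m] at hm

theorem rset_eq_cpos {x z : G} (hz : z ∈ S.pos) (hxz : IsConj x z) : S.Rset x = S.Cpos x :=
  Set.ext fun _ => and_congr_right fun hxy => S.recurrent_iff_mem_pos hz (hxy.symm.trans hxz)

theorem rset_eq_inv_rset_inv (x : G) : S.Rset x = (S.Rset x⁻¹)⁻¹ :=
  Set.ext fun _ => and_congr isConj_inv_inv_iff.symm S.recurrent_inv_iff.symm

theorem cneg_eq_inv_cpos_inv (x : G) : S.Cneg x = (S.Cpos x⁻¹)⁻¹ :=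
  Set.ext fun _ => and_congr_left' isConj_inv_inv_iff.symm

end GarsideStructure

/-- if `x` is conjugate to a positive element then its recurrent conjugates
are exactly its positive conjugates; if `x` is conjugate to a negative element then its
recurrent conjugates are exactly its negative conjugates, which are the inverses of the
positive conjugates of `x⁻¹`. -/
theorem garside_recurrent_eq_positive_or_negative {G : Type*} [Group G]
    (S : GarsideStructure G) (x : G) :
    ((∃ y ∈ S.pos, IsConj x y) → S.Rset x = S.Cpos x) ∧
    ((∃ y : G, y⁻¹ ∈ S.pos ∧ IsConj x y) →
      S.Rset x = S.Cneg x ∧ S.Cneg x = (S.Cpos x⁻¹)⁻¹) := by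
  refine ⟨fun ⟨z, hz, hxz⟩ => S.rset_eq_cpos hz hxz,
    fun ⟨z, hz, hxz⟩ => ⟨?_, S.cneg_eq_inv_cpos_inv x⟩⟩
  calc S.Rset x = (S.Rset x⁻¹)⁻¹ := S.rset_eq_inv_rset_inv x
    _ = (S.Cpos x⁻¹)⁻¹ := by rw [S.rset_eq_cpos hz (isConj_inv_inv_iff.mpr hxz)]
    _ = S.Cneg x := (S.cneg_eq_inv_cpos_inv x).symm
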